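/- Let A : ℝ^N → ℝ^m be linear and v ∈ ker A with v ≠ 0. Suppose φ : ℝ^m → ℝ^N satisfies ‖φ(0)‖ ≤ ε (for instance, φ approximates to accuracy ε an optimal reconstruction map for a set containing 0 whose optimality constant is 0). Then every ψ : ℝ^m → ℝ^N whose worst-case error on {0, v} is at most ‖v‖/2 (i.e. every optimal map for the problem obtained after adding the data point (v, 0)) satisfies sup_{y ∈ ℝ^m} ‖φ(y) − ψ(y)‖ ≥ ‖v‖/2 − ε. In particular, if ‖v‖ = 3/4 and ε < 11/40, then sup_{y} ‖φ(y) − ψ(y)‖ > 10^{-1}. -/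

import Mathlib

open scoped ENNReal

/-- Worst-case (ℓ²) reconstruction error of `φ` on the set `M₁` for the forward map `A`. -/
noncomputable def worstError {N m : ℕ}
    (A : EuclideanSpace ℝ (Fin N) →ₗ[ℝ] EuclideanSpace ℝ (Fin m))
    (M₁ : Set (EuclideanSpace ℝ (Fin N)))
    (φ : EuclideanSpace ℝ (Fin m) → EuclideanSpace ℝ (Fin N)) : ℝ≥0∞ :=
  ⨆ x : M₁, (‖φ (A (x : EuclideanSpace ℝ (Fin N))) - (x : EuclideanSpace ℝ (Fin N))‖₊ : ℝ≥0∞)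

/-- Optimality constant of the pair `(A, M₁)`: the infimum of the worst-case error
over all reconstruction maps. -/
noncomputable def optConst {N m : ℕ}
    (A : EuclideanSpace ℝ (Fin N) →ₗ[ℝ] EuclideanSpace ℝ (Fin m))
    (M₁ : Set (EuclideanSpace ℝ (Fin N))) : ℝ≥0∞ :=
  ⨅ φ : EuclideanSpace ℝ (Fin m) → EuclideanSpace ℝ (Fin N), worstError A M₁ φ

/-- if `‖φ 0‖ ≤ ε` then every `ψ` with worst-case error at most `‖v‖/2`
on `{0, v}` satisfies `sup_y ‖φ y - ψ y‖ ≥ ‖v‖/2 - ε`; in particular, if `‖v‖ = 3/4`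
and `ε < 11/40` then this supremum exceeds `10⁻¹`. -/
theorem stmt_15 (m N : ℕ)
    (A : EuclideanSpace ℝ (Fin N) →ₗ[ℝ] EuclideanSpace ℝ (Fin m))
    (v : EuclideanSpace ℝ (Fin N)) (hv : v ∈ LinearMap.ker A) (hv0 : v ≠ 0)
    (φ : EuclideanSpace ℝ (Fin m) → EuclideanSpace ℝ (Fin N)) (ε : ℝ)
    (hφ : ‖φ 0‖ ≤ ε) :
    ∀ ψ : EuclideanSpace ℝ (Fin m) → EuclideanSpace ℝ (Fin N),
      worstError A {0, v} ψ ≤ ENNReal.ofReal (‖v‖ / 2) →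
      ENNReal.ofReal (‖v‖ / 2 - ε) ≤
        (⨆ y : EuclideanSpace ℝ (Fin m), (‖φ y - ψ y‖₊ : ℝ≥0∞)) ∧
      (‖v‖ = 3 / 4 → ε < 11 / 40 →
        ENNReal.ofReal ((10 : ℝ)⁻¹) <
          ⨆ y : EuclideanSpace ℝ (Fin m), (‖φ y - ψ y‖₊ : ℝ≥0∞)) := by
  intro ψ hψ
  have hA : A v = 0 := hv
  have h1 : (‖ψ 0 - v‖₊ : ℝ≥0∞) ≤ ENNReal.ofReal (‖v‖ / 2) := by
    refine le_trans ?_ hψ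
    have h := le_iSup (fun x : ({0, v} : Set (EuclideanSpace ℝ (Fin N))) =>
      (‖ψ (A (x : EuclideanSpace ℝ (Fin N))) - (x : EuclideanSpace ℝ (Fin N))‖₊ : ℝ≥0∞))
      ⟨v, by simp⟩
    simp only [hA] at h
    exact h
  have h2 : ‖ψ 0 - v‖ ≤ ‖v‖ / 2 := by
    have h3 : ENNReal.ofReal ‖ψ 0 - v‖ ≤ ENNReal.ofReal (‖v‖ / 2) := by
      rw [ofReal_norm_eq_enorm]
      exact h1
    exact (ENNReal.ofReal_le_ofReal_iff (by positivity)).1 h3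
  have key : ENNReal.ofReal (‖v‖ / 2 - ε) ≤
      (⨆ y : EuclideanSpace ℝ (Fin m), (‖φ y - ψ y‖₊ : ℝ≥0∞)) := by
    refine le_trans ?_ (le_iSup (fun y : EuclideanSpace ℝ (Fin m) =>
      (‖φ y - ψ y‖₊ : ℝ≥0∞)) 0)
    have h4 : ‖v‖ / 2 - ε ≤ ‖φ 0 - ψ 0‖ := by
      have a := norm_sub_norm_le v (ψ 0)
      have b := norm_sub_norm_le (ψ 0) (φ 0)
      rw [norm_sub_rev] at a b
      linarith
    have h5 := ENNReal.ofReal_le_ofReal h4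
    rw [ofReal_norm_eq_enorm] at h5
    exact h5
  refine ⟨key, fun hn hε => lt_of_lt_of_le ?_ key⟩
  rw [ENNReal.ofReal_lt_ofReal_iff_of_nonneg (by norm_num), hn]
  linarith
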